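/- Let G be a connected undirected unweighted graph on vertex set V of n nodes with radius R := min_{u ∈ V} max_{v ∈ V} dist(u,v). Let 0 < ε ≤ 1 and let d̃ : V×V → ℝ be a (1+ε)-approximation of the distances of G. For each v ∈ V let N(v) be a set of ⌈√n⌉ nodes u with the smallest values d̃(v,u). Let S ⊆ V satisfy S ∩ N(v) ≠ ∅ for every v ∈ V, let w ∈ V be a node maximizing d̃(w,S), let W := N(w), and define R̃ := min_{s ∈ S ∪ W ∪ {w}} max_{v ∈ V} d̃(s,v). Then R ≤ R̃ ≤ ((1.5 + ε)·R + 2/3)·(1+ε). -/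

import Mathlib

/-!
Distances in a connected unweighted graph are natural numbers realised by walks, so every point of a
shortest walk splits its length exactly.  Let `c` be a center, and let `ecc` denote eccentricity.

If some `s ∈ S` has `dist(s,c) ≤ (1/2+ε)R + 2/3`, then `ecc(s) ≤ (3/2+ε)R + 2/3` by the triangle
inequality.  Otherwise `d̃(c,S)`, hence also `d̃(w,S)`, exceeds `(1/2+ε)R + 2/3`; as `N(w)` meets `S`,
it contains every node `x` with `d̃(w,x) ≤ (1/2+ε)R + 2/3`.  Take `x` on a shortest path from `w`
to `c` at distance `min(⌊R/2⌋, dist(w,c))` from `w`.  Then `d̃(w,x) ≤ (1+ε)R/2`, so `x ∈ N(w)`, and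
`dist(x,c) ≤ (R+1)/2`, which bounds `ecc(x)` by `(3R+1)/2`.  In both cases the factor `1+ε` passes
from distances to `d̃`.
-/

open scoped BigOperators Classical ENNReal

/-- `p` is a walk with `k` edges (hops) in the graph whose adjacency relation is `Adj`. -/
def IsWalk {V : Type*} (Adj : V → V → Prop) (k : ℕ) (p : Fin (k + 1) → V) : Prop :=
  ∀ i : Fin k, Adj (p i.castSucc) (p i.succ)

/-- The number of edges of the walk `p` with `k` edges (all edges have weight `1`). -/
noncomputable def walkCost {V : Type*} (c : V → V → ℝ≥0∞) (k : ℕ) (p : Fin (k + 1) → V) :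
    ℝ≥0∞ :=
  ∑ i : Fin k, c (p i.castSucc) (p i.succ)

/-- The shortest-path distance from `u` to `v` in the graph given by `Adj` with edge
weights `c` (it is `⊤` if there is no walk from `u` to `v`). -/
noncomputable def gdist {V : Type*} (Adj : V → V → Prop) (c : V → V → ℝ≥0∞) (u v : V) :
    ℝ≥0∞ :=
  ⨅ (k : ℕ) (p : {p : Fin (k + 1) → V //
      p 0 = u ∧ p (Fin.last k) = v ∧ IsWalk Adj k p}), walkCost c k p.1

/-- The (unweighted) shortest-path distance as a real number. -/
noncomputable def dR {V : Type*} (Adj : V → V → Prop) (u v : V) : ℝ :=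
  (gdist Adj (fun _ _ => (1 : ℝ≥0∞)) u v).toReal

/-- There is a walk with `k` edges from `u` to `v`.  Only the values of `f` on `0, …, k` matter;
indexing by `ℕ` makes restriction, concatenation and reversal of walks easy to write. -/
def HasWalk {V : Type*} (Adj : V → V → Prop) (k : ℕ) (u v : V) : Prop :=
  ∃ f : ℕ → V, f 0 = u ∧ f k = v ∧ ∀ i < k, Adj (f i) (f (i + 1))

lemma HasWalk.append {V : Type*} {Adj : V → V → Prop} {k l : ℕ} {u v x : V}
    (h1 : HasWalk Adj k u v) (h2 : HasWalk Adj l v x) : HasWalk Adj (k + l) u x := by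
  obtain ⟨f, hf0, hfk, hf⟩ := h1
  obtain ⟨g, hg0, hgl, hg⟩ := h2
  refine ⟨fun i => if i ≤ k then f i else g (i - k), by simp [hf0], ?_, ?_⟩
  · by_cases hl : l = 0
    · subst hl; simp [hfk, ← hgl, hg0]
    · simp [hl, hgl]
  · intro i hi
    rcases lt_trichotomy i k with h | h | h
    · have h' : i + 1 ≤ k := h
      simpa [h.le, h'] using hf i h
    · subst h
      have := hg 0 (by omega)
      simpa [hfk, hg0] using this
    · have h1 : ¬ i ≤ k := by omega
      have h2 : ¬ i + 1 ≤ k := by omega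
      have h3 : i + 1 - k = (i - k) + 1 := by omega
      simp only [h1, h2, if_false, h3]
      exact hg _ (by omega)

lemma HasWalk.reverse {V : Type*} {Adj : V → V → Prop} (hsym : ∀ u v : V, Adj u v → Adj v u)
    {k : ℕ} {u v : V} (h : HasWalk Adj k u v) : HasWalk Adj k v u := by
  obtain ⟨f, hf0, hfk, hf⟩ := h
  refine ⟨fun i => f (k - i), by simpa, by simpa, ?_⟩
  intro i hi
  have h3 : k - i = (k - (i + 1)) + 1 := by omega
  simp only [h3]
  exact hsym _ _ (hf _ (by omega))

lemma walkCost_one {V : Type*} (k : ℕ) (p : Fin (k + 1) → V) :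
    walkCost (fun _ _ => (1 : ℝ≥0∞)) k p = k := by
  simp [walkCost]

lemma gdist_le_of_hasWalk {V : Type*} {Adj : V → V → Prop} {k : ℕ} {u v : V}
    (h : HasWalk Adj k u v) : gdist Adj (fun _ _ => (1 : ℝ≥0∞)) u v ≤ k := by
  obtain ⟨f, hf0, hfk, hf⟩ := h
  refine (iInf₂_le k ⟨fun i => f i, by simpa using hf0, by simpa using hfk, ?_⟩).trans
    (walkCost_one k _).le
  intro i
  simpa using hf i i.2

lemma dR_le_of_hasWalk {V : Type*} {Adj : V → V → Prop} {k : ℕ} {u v : V}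
    (h : HasWalk Adj k u v) : dR Adj u v ≤ k := by
  have := ENNReal.toReal_mono (by simp) (gdist_le_of_hasWalk h)
  simpa [dR] using this

/-- The infimum defining the distance is attained: a finite distance is the length of a walk. -/
lemma exists_hasWalk_dR {V : Type*} {Adj : V → V → Prop} {u v : V}
    (h : gdist Adj (fun _ _ => (1 : ℝ≥0∞)) u v ≠ ⊤) :
    ∃ k : ℕ, HasWalk Adj k u v ∧ dR Adj u v = k := by
  have hwalk : ∀ (k : ℕ) (p : {p : Fin (k + 1) → V //
      p 0 = u ∧ p (Fin.last k) = v ∧ IsWalk Adj k p}), HasWalk Adj k u v := by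
    rintro k ⟨p, h0, hk, hp⟩
    refine ⟨fun i => if hi : i < k + 1 then p ⟨i, hi⟩ else u, by simpa using h0, ?_, ?_⟩
    · simpa [Fin.last] using hk
    · intro i hi
      have h1 : i < k + 1 := by omega
      have := hp ⟨i, hi⟩
      simpa [h1, hi] using this
  have hex : ∃ k : ℕ, HasWalk Adj k u v := by
    by_contra hno
    apply h
    simp only [gdist, iInf_eq_top]
    exact fun k p => absurd ⟨k, hwalk k p⟩ hno
  refine ⟨Nat.find hex, Nat.find_spec hex, le_antisymm
    (dR_le_of_hasWalk (Nat.find_spec hex)) ?_⟩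
  have hle : ((Nat.find hex : ℕ) : ℝ≥0∞) ≤ gdist Adj (fun _ _ => (1 : ℝ≥0∞)) u v := by
    refine le_iInf₂ fun k p => ?_
    rw [walkCost_one]
    exact_mod_cast Nat.find_min' hex (hwalk k p)
  simpa [dR] using ENNReal.toReal_mono h hle

lemma dR_triangle {V : Type*} {Adj : V → V → Prop}
    (hconn : ∀ u v : V, gdist Adj (fun _ _ => (1 : ℝ≥0∞)) u v ≠ ⊤) (u v x : V) :
    dR Adj u x ≤ dR Adj u v + dR Adj v x := by
  obtain ⟨k, hk, ek⟩ := exists_hasWalk_dR (hconn u v)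
  obtain ⟨l, hl, el⟩ := exists_hasWalk_dR (hconn v x)
  rw [ek, el]
  exact_mod_cast dR_le_of_hasWalk (hk.append hl)

lemma dR_comm_le {V : Type*} {Adj : V → V → Prop} (hsym : ∀ u v : V, Adj u v → Adj v u)
    (hconn : ∀ u v : V, gdist Adj (fun _ _ => (1 : ℝ≥0∞)) u v ≠ ⊤) (u v : V) :
    dR Adj v u ≤ dR Adj u v := by
  obtain ⟨k, hk, ek⟩ := exists_hasWalk_dR (hconn u v)
  rw [ek]
  exact dR_le_of_hasWalk (hk.reverse hsym)

/-- A walk of length at most `r` has a vertex within `⌊r/2⌋` of its start and within `⌈r/2⌉` of its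
end. -/
lemma exists_midpoint {V : Type*} {Adj : V → V → Prop} {k r : ℕ} {u v : V}
    (h : HasWalk Adj k u v) (hkr : k ≤ r) :
    ∃ x, dR Adj u x ≤ (r : ℝ) / 2 ∧ dR Adj x v ≤ ((r : ℝ) + 1) / 2 := by
  obtain ⟨f, hf0, hfk, hf⟩ := h
  set a := min (r / 2) k with ha
  refine ⟨f a, ?_, ?_⟩
  · have h1 : HasWalk Adj a u (f a) := ⟨f, hf0, rfl, fun i hi => hf i (by omega)⟩
    have h2 : 2 * a ≤ r := by omega
    have h3 : (2 : ℝ) * a ≤ r := by exact_mod_cast h2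
    linarith [dR_le_of_hasWalk h1]
  · have h1 : HasWalk Adj (k - a) (f a) v := by
      refine ⟨fun i => f (a + i), rfl, ?_, fun i hi => hf (a + i) (by omega)⟩
      have h0 : a + (k - a) = k := by omega
      simp only [h0, hfk]
    have h2 : 2 * (k - a) ≤ r + 1 := by omega
    have h3 : (2 : ℝ) * ((k - a : ℕ) : ℝ) ≤ r + 1 := by exact_mod_cast h2
    linarith [dR_le_of_hasWalk h1]

/-- **Approximate radius from approximate distances (Lemma E.2).**
`G` is a connected undirected unweighted graph with radius `R`; `d̃` is a
`(1+ε)`-approximation of its distances; `N v` consists of `⌈√n⌉` nodes with smallest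
`d̃(v,·)`; `S` intersects every `N v`; `w` maximizes `d̃(·,S)`; `W = N w`; and
`R̃ = min_{s ∈ S ∪ W ∪ {w}} max_v d̃(s,v)`.  Then `R ≤ R̃ ≤ ((1.5+ε)·R + 2/3)·(1+ε)`. -/
theorem stmt_14 {V : Type*} [Fintype V] [DecidableEq V] [Nonempty V]
    (n : ℕ) (hn : Fintype.card V = n)
    (Adj : V → V → Prop) (hsym : ∀ u v : V, Adj u v → Adj v u)
    (hconn : ∀ u v : V, gdist Adj (fun _ _ => (1 : ℝ≥0∞)) u v ≠ ⊤)
    (R : ℝ)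
    (hR : R = Finset.univ.inf' Finset.univ_nonempty
      (fun u => Finset.univ.sup' Finset.univ_nonempty (fun v => dR Adj u v)))
    (ε : ℝ) (hε0 : 0 < ε) (hε1 : ε ≤ 1)
    (dt : V → V → ℝ)
    (hdt : ∀ u v : V, dR Adj u v ≤ dt u v ∧ dt u v ≤ (1 + ε) * dR Adj u v)
    (N : V → Finset V) (hNcard : ∀ v, (N v).card = ⌈Real.sqrt n⌉₊)
    (hNmin : ∀ v : V, ∀ u ∈ N v, ∀ x : V, x ∉ N v → dt v u ≤ dt v x)
    (S : Finset V) (hSne : S.Nonempty) (hS : ∀ v : V, (S ∩ N v).Nonempty)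
    (w : V) (hw : ∀ v : V, S.inf' hSne (fun u => dt v u) ≤ S.inf' hSne (fun u => dt w u)) :
    R ≤ (insert w (S ∪ N w)).inf' (Finset.insert_nonempty _ _)
          (fun s2 => Finset.univ.sup' Finset.univ_nonempty (fun v => dt s2 v)) ∧
      (insert w (S ∪ N w)).inf' (Finset.insert_nonempty _ _)
          (fun s2 => Finset.univ.sup' Finset.univ_nonempty (fun v => dt s2 v)) ≤
        ((1.5 + ε) * R + 2 / 3) * (1 + ε) := by
  classical
  have hattain : ∃ c : V, (∀ v, dR Adj c v ≤ R) ∧ ∃ v, R = dR Adj c v := by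
    obtain ⟨c, -, hc⟩ := Finset.exists_mem_eq_inf' (Finset.univ_nonempty (α := V))
      (fun u => Finset.univ.sup' Finset.univ_nonempty (fun v => dR Adj u v))
    obtain ⟨v, -, hv⟩ := Finset.exists_mem_eq_sup' (Finset.univ_nonempty (α := V))
      (fun v => dR Adj c v)
    refine ⟨c, fun x => ?_, v, by rw [hR, hc, hv]⟩
    rw [hR, hc]
    exact Finset.le_sup' (fun v => dR Adj c v) (Finset.mem_univ x)
  obtain ⟨c, hc, v₀, hv₀⟩ := hattain
  obtain ⟨r, -, hr⟩ := exists_hasWalk_dR (hconn c v₀)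
  have hRr : R = r := hv₀.trans hr
  have hr0 : (0 : ℝ) ≤ r := Nat.cast_nonneg r
  have hεr : 0 ≤ ε * r := by positivity
  constructor
  · refine Finset.le_inf' _ _ fun s _ => ?_
    rw [hR]
    refine (Finset.inf'_le _ (Finset.mem_univ s)).trans ?_
    exact Finset.sup'_mono_fun fun v _ => (hdt s v).1
  -- It suffices to find a candidate close to the center `c`.
  suffices h : ∃ s ∈ insert w (S ∪ N w), dR Adj s c ≤ (1 / 2 + ε) * R + 2 / 3 by
    obtain ⟨s, hs, hsc⟩ := h
    refine (Finset.inf'_le _ hs).trans (Finset.sup'_le _ _ fun v _ => ?_)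
    have h1 : dR Adj s v ≤ (1.5 + ε) * R + 2 / 3 := by
      have := dR_triangle hconn s c v
      have := hc v
      norm_num at *
      linarith
    calc dt s v ≤ (1 + ε) * dR Adj s v := (hdt s v).2
      _ ≤ (1 + ε) * ((1.5 + ε) * R + 2 / 3) := by gcongr
      _ = _ := by ring
  by_contra! hfar
  have hw' : (1 / 2 + ε) * R + 2 / 3 < S.inf' hSne (fun u => dt w u) := by
    refine lt_of_lt_of_le ((Finset.lt_inf'_iff _).2 fun s hs => ?_) (hw c)
    exact ((hfar s (by simp [hs])).trans_le (dR_comm_le hsym hconn c s)).trans_le (hdt c s).1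
  obtain ⟨k, hk, ek⟩ := exists_hasWalk_dR (hconn w c)
  have hkr : k ≤ r := by
    have : (k : ℝ) ≤ r := by
      rw [← ek, ← hRr]
      exact (dR_comm_le hsym hconn c w).trans (hc w)
    exact_mod_cast this
  obtain ⟨x, hwx, hxc⟩ := exists_midpoint hk hkr
  have hdwx : dt w x ≤ (1 / 2 + ε) * R + 2 / 3 := by
    have h1 := (hdt w x).2
    have h2 : (1 + ε) * dR Adj w x ≤ (1 + ε) * ((r : ℝ) / 2) := by gcongr
    rw [hRr]
    linarith
  have hxN : x ∈ N w := by
    by_contra hx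
    obtain ⟨s, hs⟩ := hS w
    rw [Finset.mem_inter] at hs
    have h1 := hNmin w s hs.2 x hx
    have h2 : S.inf' hSne (fun u => dt w u) ≤ dt w s := Finset.inf'_le _ hs.1
    linarith
  have h1 := hfar x (by simp [hxN])
  rw [hRr] at h1
  linarith
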